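/- arXiv:0911.4106 — 2 statements merged into one kernel-verified Lean document; each statement's English description precedes it below -/
import Mathlib

section
/- Let Λ be a lattice of full rank in ℝ² with successive minima λ₁ ≤ λ₂ and corresponding minimal basis vectors x₁, x₂, and let Λ_WR be the lattice spanned over ℤ by x₁ and (λ₁/λ₂)x₂. Then Δ(Λ_WR) ≥ Δ(Λ), with equality if and only if Λ = Λ_WR, which happens if and only if Λ is well-rounded. -/
noncomputable section

open InnerProductGeometry Real
open scoped Classical

/-- The Euclidean plane `ℝ²`. -/
abbrev E2 := EuclideanSpace ℝ (Fin 2)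

/-- `x₁, x₂` form a ℤ-basis of the lattice `Λ ⊆ ℝ²`: they are linearly independent
over ℝ and `Λ` is exactly the set of their integer linear combinations. -/
def IsZBasis (Λ : Set E2) (x₁ x₂ : E2) : Prop :=
  LinearIndependent ℝ ![x₁, x₂] ∧ Λ = {v : E2 | ∃ a b : ℤ, v = a • x₁ + b • x₂}

/-- `Λ` is a lattice of full rank in `ℝ²`, i.e. `Λ = XZ²` for an invertible matrix `X`. -/
def IsLattice (Λ : Set E2) : Prop := ∃ x₁ x₂ : E2, IsZBasis Λ x₁ x₂

/-- The `i`-th successive minimum of `Λ`: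
`λᵢ = inf {λ > 0 : Λ ∩ λB contains i linearly independent nonzero vectors}`. -/
noncomputable def succMin (Λ : Set E2) (i : ℕ) : ℝ :=
  sInf {r : ℝ | 0 < r ∧ ∃ v : Fin i → E2,
    (∀ j, v j ∈ Λ ∧ ‖v j‖ ≤ r) ∧ LinearIndependent ℝ v}

/-- `|det X|` for the basis matrix with columns `x₁, x₂`. -/
def detB (x₁ x₂ : E2) : ℝ := |x₁ 0 * x₂ 1 - x₁ 1 * x₂ 0|

/-- The determinant of a lattice: `|det X|` for a basis matrix `X` of `Λ`
(independent of the choice of basis). -/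
noncomputable def latDet (Λ : Set E2) : ℝ :=
  if h : IsLattice Λ then detB h.choose h.choose_spec.choose else 0

/-- The lattice packing density `Δ(Λ) = π λ₁² / (4 det Λ)`. -/
noncomputable def density (Λ : Set E2) : ℝ :=
  π * (succMin Λ 1) ^ 2 / (4 * latDet Λ)

/-- `x₁, x₂` are vectors of `Λ` corresponding to the successive minima, chosen so that
the angle between them lies in `[0, π/2]`. -/
def IsMinPair (Λ : Set E2) (x₁ x₂ : E2) : Prop :=
  x₁ ∈ Λ ∧ x₂ ∈ Λ ∧ LinearIndependent ℝ ![x₁, x₂] ∧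
    ‖x₁‖ = succMin Λ 1 ∧ ‖x₂‖ = succMin Λ 2 ∧ angle x₁ x₂ ≤ π / 2

/-- The angle `θ(Λ)` of a lattice: the angle between a pair of vectors corresponding to the
successive minima chosen with angle in `[0, π/2]` (for a well-rounded lattice this does not
depend on the choice of such a pair). -/
noncomputable def latAngle (Λ : Set E2) : ℝ :=
  if h : ∃ p : E2 × E2, IsMinPair Λ p.1 p.2 then angle h.choose.1 h.choose.2 else 0

/-- `Λ` and `Ω` are similar lattices: `Ω = α U Λ` for a nonzero real `α` and an
orthogonal `2×2` matrix `U`. -/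
def LatSimilar (Λ Ω : Set E2) : Prop :=
  ∃ (α : ℝ) (U : Matrix (Fin 2) (Fin 2) ℝ), α ≠ 0 ∧ U.transpose * U = 1 ∧
    Ω = (fun v => α • Matrix.toEuclideanLin U v) '' Λ

/-- The hexagonal lattice, spanned over ℤ by `(1, 0)` and `(1/2, √3/2)`. -/
def hexLattice : Set E2 :=
  {v : E2 | ∃ a b : ℤ, v = a • ((WithLp.equiv 2 (Fin 2 → ℝ)).symm ![1, 0]) +
    b • ((WithLp.equiv 2 (Fin 2 → ℝ)).symm ![1 / 2, Real.sqrt 3 / 2])}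

theorem detB_pos {x y : E2} (h : LinearIndependent ℝ ![x, y]) : 0 < detB x y := by
  rw [LinearIndependent.pair_iff] at h
  unfold detB
  rw [abs_pos]
  intro h0
  have h1 := h (y 0) (-(x 0)) (by
    ext i; fin_cases i
    · simp; ring
    · simp; linarith)
  have h2 := h (y 1) (-(x 1)) (by
    ext i; fin_cases i
    · simp; linarith
    · simp; ring)
  have h3 := h 1 0 (by
    ext i; fin_cases i
    · simp; linarith [h1.2]
    · simp; linarith [h2.2])
  exact one_ne_zero h3.1

theorem det_dvd {Λ : Set E2} {x y u v : E2} (h : IsZBasis Λ x y) (h' : IsZBasis Λ u v) :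
    ∃ n : ℤ, u 0 * v 1 - u 1 * v 0 = n * (x 0 * y 1 - x 1 * y 0) := by
  have hu : u ∈ Λ := by rw [h'.2]; exact ⟨1, 0, by simp⟩
  have hv : v ∈ Λ := by rw [h'.2]; exact ⟨0, 1, by simp⟩
  rw [h.2] at hu hv
  obtain ⟨a, b, rfl⟩ := hu
  obtain ⟨c, d, rfl⟩ := hv
  refine ⟨a * d - b * c, ?_⟩
  simp
  ring

theorem detB_le {Λ : Set E2} {x y u v : E2} (h : IsZBasis Λ x y) (h' : IsZBasis Λ u v) :
    detB x y ≤ detB u v := by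
  obtain ⟨n, hn⟩ := det_dvd h h'
  have hp := detB_pos h'.1
  have hq := detB_pos h.1
  unfold detB at *
  rw [hn, abs_mul] at *
  have hn0 : n ≠ 0 := by
    rintro rfl
    simp at hp
  have : (1 : ℝ) ≤ |(n : ℝ)| := by exact_mod_cast Int.one_le_abs hn0
  nlinarith

theorem latDet_eq {Λ : Set E2} {x y : E2} (h : IsZBasis Λ x y) : latDet Λ = detB x y := by
  have hL : IsLattice Λ := ⟨x, y, h⟩
  unfold latDet
  rw [dif_pos hL]
  have h' := hL.choose_spec.choose_spec
  exact le_antisymm (detB_le h' h) (detB_le h h')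

theorem succMin_one_le {Λ : Set E2} {v : E2} (hv : v ∈ Λ) (h0 : v ≠ 0) :
    succMin Λ 1 ≤ ‖v‖ := by
  apply csInf_le ⟨0, fun r hr => hr.1.le⟩
  refine ⟨norm_pos_iff.2 h0, fun _ => v, fun _ => ⟨hv, le_rfl⟩, ?_⟩
  exact LinearIndependent.of_subsingleton (0 : Fin 1) h0

theorem succMin_two_le {Λ : Set E2} {v w : E2} (hv : v ∈ Λ) (hw : w ∈ Λ)
    (h : LinearIndependent ℝ ![v, w]) : succMin Λ 2 ≤ max ‖v‖ ‖w‖ := by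
  apply csInf_le ⟨0, fun r hr => hr.1.le⟩
  have h0 : v ≠ 0 := h.ne_zero 0
  refine ⟨lt_max_of_lt_left (norm_pos_iff.2 h0), ![v, w], fun j => ?_, h⟩
  fin_cases j
  · exact ⟨hv, le_max_left _ _⟩
  · exact ⟨hw, le_max_right _ _⟩

theorem succMin_one_eq {Λ : Set E2} {x : E2} (hx : x ∈ Λ) (h0 : x ≠ 0)
    (h : ∀ v ∈ Λ, v ≠ 0 → ‖x‖ ≤ ‖v‖) : succMin Λ 1 = ‖x‖ := by
  apply le_antisymm (succMin_one_le hx h0)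
  apply le_csInf
  · refine ⟨‖x‖, norm_pos_iff.2 h0, fun _ => x, fun _ => ⟨hx, le_rfl⟩, ?_⟩
    exact LinearIndependent.of_subsingleton (0 : Fin 1) h0
  · rintro r ⟨_, v, hv, hl⟩
    exact (h _ (hv 0).1 (hl.ne_zero 0)).trans (hv 0).2

theorem int_form (a b : ℤ) (h : a ≠ 0 ∨ b ≠ 0) : 1 ≤ a ^ 2 + b ^ 2 ∧ 1 ≤ a ^ 2 + b ^ 2 + a * b := by
  have h1 : 0 < a ^ 2 + b ^ 2 := by
    rcases h with h | h
    · have := pow_pos (abs_pos.2 h) 2; rw [sq_abs] at this; nlinarith [sq_nonneg b]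
    · have := pow_pos (abs_pos.2 h) 2; rw [sq_abs] at this; nlinarith [sq_nonneg a]
  exact ⟨h1, by by_contra hc; nlinarith [sq_nonneg (a + b)]⟩

theorem norm_form {x z : E2} (hxz : ‖x‖ = ‖z‖) (hp : 0 ≤ inner ℝ x z)
    (hq : 2 * inner ℝ x z ≤ ‖x‖ ^ 2) (a b : ℤ) (h : a ≠ 0 ∨ b ≠ 0) :
    ‖x‖ ≤ ‖a • x + b • z‖ := by
  obtain ⟨h1, h2⟩ := int_form a b h
  have h1' : (1 : ℝ) ≤ (a : ℝ) ^ 2 + (b : ℝ) ^ 2 := by exact_mod_cast h1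
  have h2' : (1 : ℝ) ≤ (a : ℝ) ^ 2 + (b : ℝ) ^ 2 + a * b := by exact_mod_cast h2
  refine (pow_le_pow_iff_left₀ (norm_nonneg _) (norm_nonneg _) two_ne_zero).1 ?_
  rw [← Int.cast_smul_eq_zsmul ℝ, ← Int.cast_smul_eq_zsmul ℝ, norm_add_sq_real, norm_smul,
    norm_smul, inner_smul_left, inner_smul_right, mul_pow, mul_pow, ← hxz, Real.norm_eq_abs,
    Real.norm_eq_abs, sq_abs, sq_abs]
  simp only [conj_trivial]
  set p := inner ℝ x z
  set n := ‖x‖ ^ 2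
  have e1 : 0 ≤ (n - 2 * p) * ((a : ℝ) ^ 2 + (b : ℝ) ^ 2 - 1) :=
    mul_nonneg (by linarith) (by linarith)
  have e2 : 0 ≤ (2 * p) * ((a : ℝ) ^ 2 + (b : ℝ) ^ 2 + a * b - 1) :=
    mul_nonneg (by linarith) (by linarith)
  nlinarith

/-- For a full-rank lattice `Λ ⊆ ℝ²` with minimal basis `x₁, x₂` and
`Λ_WR = ℤx₁ + ℤ(λ₁/λ₂)x₂`, one has `Δ(Λ_WR) ≥ Δ(Λ)`, with equality iff `Λ = Λ_WR`,
which happens iff `Λ` is well-rounded. -/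
theorem stmt6 (Λ : Set E2) (hΛ : IsLattice Λ) (x₁ x₂ : E2)
    (hmin : IsMinPair Λ x₁ x₂) (hbasis : IsZBasis Λ x₁ x₂)
    (ΛWR : Set E2)
    (hdef : ΛWR = {v : E2 | ∃ a b : ℤ,
      v = a • x₁ + b • ((succMin Λ 1 / succMin Λ 2) • x₂)}) :
    density Λ ≤ density ΛWR ∧
      (density ΛWR = density Λ ↔ Λ = ΛWR) ∧
      (Λ = ΛWR ↔ succMin Λ 1 = succMin Λ 2) := by 
  obtain ⟨hm1, hm2, hli, hn1, hn2, hang⟩ := hmin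
  have hx1 : x₁ ≠ 0 := hli.ne_zero 0
  have hx2 : x₂ ≠ 0 := hli.ne_zero 1
  have hp1 : 0 < ‖x₁‖ := norm_pos_iff.2 hx1
  have hp2 : 0 < ‖x₂‖ := norm_pos_iff.2 hx2
  have h12 : ‖x₁‖ ≤ ‖x₂‖ := by rw [hn1]; exact succMin_one_le hm2 hx2
  have hpair := LinearIndependent.pair_iff.1 hli
  -- the difference
  have hdm : x₂ - x₁ ∈ Λ := by
    rw [hbasis.2]; exact ⟨-1, 1, by simp; abel⟩
  have hdli : LinearIndependent ℝ ![x₁, x₂ - x₁] := by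
    rw [LinearIndependent.pair_iff]
    intro s t hst
    have := hpair (s - t) t (by rw [← hst]; module)
    exact ⟨by linarith [this.1, this.2], this.2⟩
  have hd : ‖x₂‖ ≤ ‖x₂ - x₁‖ := by
    have ha := succMin_two_le hm1 hdm hdli
    have hb := succMin_one_le hdm (hdli.ne_zero 1)
    rw [← hn2] at ha
    rw [← hn1] at hb
    rwa [max_eq_right hb] at ha
  have hin0 : 0 ≤ inner ℝ x₁ x₂ := by
    rw [← cos_angle_mul_norm_mul_norm]
    have : 0 ≤ Real.cos (angle x₁ x₂) :=
      Real.cos_nonneg_of_neg_pi_div_two_le_of_le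
        (by linarith [angle_nonneg x₁ x₂, Real.pi_pos]) hang
    positivity
  have hin1 : 2 * inner ℝ x₁ x₂ ≤ ‖x₁‖ ^ 2 := by
    have h1 := norm_sub_sq_real x₂ x₁
    rw [real_inner_comm] at h1
    have := pow_le_pow_left₀ hp2.le hd 2
    linarith
  rw [← hn1, ← hn2] at hdef ⊢
  set c := ‖x₁‖ / ‖x₂‖ with hc
  have hc0 : 0 < c := div_pos hp1 hp2
  have hc1 : c ≤ 1 := (div_le_one hp2).2 h12
  have hcx : c * ‖x₂‖ = ‖x₁‖ := div_mul_cancel₀ _ hp2.ne'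
  have hzb : IsZBasis ΛWR x₁ (c • x₂) := by
    refine ⟨?_, hdef⟩
    rw [LinearIndependent.pair_iff]
    intro s t hst
    have := hpair s (t * c) (by rw [← hst]; module)
    exact ⟨this.1, (mul_eq_zero.1 this.2).resolve_right hc0.ne'⟩
  have hWm : x₁ ∈ ΛWR := by rw [hdef]; exact ⟨1, 0, by simp⟩
  have hs : succMin ΛWR 1 = ‖x₁‖ := by
    apply succMin_one_eq hWm hx1
    intro v hv hv0
    rw [hdef] at hv
    obtain ⟨a, b, rfl⟩ := hv
    apply norm_form
    · rw [norm_smul, Real.norm_eq_abs, abs_of_pos hc0, hcx]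
    · rw [inner_smul_right]; positivity
    · rw [inner_smul_right]; nlinarith
    · by_contra hcon
      push Not at hcon
      apply hv0
      simp [hcon.1, hcon.2]
  have hdet : detB x₁ (c • x₂) = c * detB x₁ x₂ := by
    unfold detB
    rw [← abs_of_pos hc0, ← abs_mul, abs_of_pos hc0]
    congr 1
    simp
    ring
  have hD : 0 < detB x₁ x₂ := detB_pos hli
  have hdens : density ΛWR = density Λ / c := by
    unfold density
    rw [hs, ← hn1, latDet_eq hzb, latDet_eq hbasis, hdet]
    field_simp
  have hdpos : 0 < density Λ := by
    unfold density
    rw [← hn1, latDet_eq hbasis]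
    positivity
  have hA : Λ = ΛWR ↔ ‖x₁‖ = ‖x₂‖ := by
    constructor
    · intro he
      have hz : c • x₂ ∈ Λ := by
        rw [he, hdef]; exact ⟨0, 1, by simp⟩
      rw [hbasis.2] at hz
      obtain ⟨a, b, hab⟩ := hz
      rw [← Int.cast_smul_eq_zsmul ℝ, ← Int.cast_smul_eq_zsmul ℝ] at hab
      have := (hpair a (b - c) (by rw [sub_smul, hab]; module)).2
      have hbc : (b : ℝ) = c := by linarith
      rw [← hbc] at hc0 hc1
      have hb0 : 0 < b := by exact_mod_cast hc0
      have hb1 : b ≤ 1 := by exact_mod_cast hc1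
      have hb : b = 1 := by omega
      rw [hb] at hbc
      rw [← hcx, ← hbc]; simp
    · intro he
      have : c = 1 := by rw [hc, he]; exact div_self hp2.ne'
      rw [hdef, this, hbasis.2]
      simp
  have hB : density ΛWR = density Λ ↔ ‖x₁‖ = ‖x₂‖ := by
    rw [hdens, div_eq_iff hc0.ne', hc]
    constructor
    · intro he
      have : c = 1 := mul_left_cancel₀ hdpos.ne' (by rw [mul_one]; exact he.symm)
      rw [← hcx, this, one_mul]
    · intro he
      rw [he, div_self hp2.ne', mul_one]
  refine ⟨?_, hB.trans hA.symm, hA⟩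
  rw [hdens]
  exact le_div_self hdpos.le hc0 hc1
end
end

section
/- Let Λ be a well-rounded lattice of full rank in ℝ² and let Ω be a lattice of full rank in ℝ². Then Ω is similar to Λ if and only if Ω is also well-rounded and θ(Λ) = θ(Ω), where θ(·) denotes the angle of a well-rounded lattice. In particular, the well-rounded property is preserved under similarity. -/
noncomputable section

open InnerProductGeometry Real
open scoped Classical

lemma nsq (x : E2) : ‖x‖ ^ 2 = x 0 * x 0 + x 1 * x 1 := by
  rw [EuclideanSpace.norm_sq_eq, Fin.sum_univ_two]
  simp only [Real.norm_eq_abs, sq_abs]; ring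

lemma inn (x y : E2) : inner ℝ x y = x 0 * y 0 + x 1 * y 1 := by
  simp [PiLp.inner_apply, Fin.sum_univ_two]; ring

lemma li_iff (x y : E2) : LinearIndependent ℝ ![x, y] ↔ x 0 * y 1 - x 1 * y 0 ≠ 0 := by
  rw [LinearIndependent.pair_iff]
  constructor
  · intro h hd
    have h1 := h (y 1) (-(x 1)) (by
      ext i; fin_cases i
      · simp; linarith
      · simp; ring)
    have h2 := h (y 0) (-(x 0)) (by
      ext i; fin_cases i
      · simp; ring
      · simp; linarith)
    have h3 := h 1 0 (by
      ext i; fin_cases i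
      · simp; linarith [h2.2]
      · simp; linarith [h1.2])
    exact one_ne_zero h3.1
  · intro h s t hst
    have e0 : s * x 0 + t * y 0 = 0 := by simpa using congrArg (fun v : E2 => v 0) hst
    have e1 : s * x 1 + t * y 1 = 0 := by simpa using congrArg (fun v : E2 => v 1) hst
    constructor
    · have : s * (x 0 * y 1 - x 1 * y 0) = 0 := by linear_combination y 1 * e0 - y 0 * e1
      exact (mul_eq_zero.mp this).resolve_right h
    · have : t * (x 0 * y 1 - x 1 * y 0) = 0 := by linear_combination x 0 * e1 - x 1 * e0
      exact (mul_eq_zero.mp this).resolve_right h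

lemma fin_ball {Λ : Set E2} (h : IsLattice Λ) (R : ℝ) : {v | v ∈ Λ ∧ ‖v‖ ≤ R}.Finite := by
  obtain ⟨x, y, hli, rfl⟩ := h
  let b := basisOfLinearIndependentOfCardEqFinrank hli (by simp)
  have hb : (b : Fin 2 → E2) = ![x, y] := by simp [b]
  have hc : IsClosed ((Submodule.span ℤ (Set.range b)).toAddSubgroup : Set E2) :=
    inferInstance |> fun (_ : DiscreteTopology (Submodule.span ℤ (Set.range b)).toAddSubgroup) =>
      AddSubgroup.isClosed_of_discrete
  have hdt : DiscreteTopology (Submodule.span ℤ (Set.range b)) := inferInstance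
  have hf := Metric.finite_isBounded_inter_isClosed
    (s := ((Submodule.span ℤ (Set.range b) : Submodule ℤ E2) : Set E2))
    (K := Metric.closedBall 0 R) ⟨hdt⟩ Metric.isBounded_closedBall hc
  refine hf.subset ?_
  rintro v ⟨⟨m, n, rfl⟩, hv⟩
  refine ⟨by simpa using hv, ?_⟩
  rw [hb]
  refine Submodule.add_mem _ (Submodule.smul_mem _ _ (Submodule.subset_span ⟨0, rfl⟩))
    (Submodule.smul_mem _ _ (Submodule.subset_span ⟨1, rfl⟩))

lemma lat_sub {Λ : Set E2} (h : IsLattice Λ) {x y : E2} (hx : x ∈ Λ) (hy : y ∈ Λ) (m n : ℤ) :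
    m • x + n • y ∈ Λ := by
  obtain ⟨u, v, hli, rfl⟩ := h
  obtain ⟨a, b, rfl⟩ := hx
  obtain ⟨c, d, rfl⟩ := hy
  exact ⟨m * a + n * c, m * b + n * d, by module⟩

lemma bdd (Λ : Set E2) (i : ℕ) : BddBelow {r : ℝ | 0 < r ∧ ∃ v : Fin i → E2,
    (∀ j, v j ∈ Λ ∧ ‖v j‖ ≤ r) ∧ LinearIndependent ℝ v} := ⟨0, fun _ h => h.1.le⟩

lemma sm1_le {Λ : Set E2} {x : E2} (hx : x ∈ Λ) (h0 : x ≠ 0) : succMin Λ 1 ≤ ‖x‖ := by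
  refine csInf_le (bdd _ _) ⟨norm_pos_iff.2 h0, fun _ => x, fun _ => ⟨hx, le_rfl⟩, ?_⟩
  exact (LinearIndependent.of_subsingleton (0 : Fin 1) h0)

lemma attained {Λ : Set E2} (h : IsLattice Λ) : ∃ x y : E2, x ∈ Λ ∧ y ∈ Λ ∧
    LinearIndependent ℝ ![x, y] ∧ ‖x‖ ≤ succMin Λ 2 ∧ ‖y‖ ≤ succMin Λ 2 := by
  obtain ⟨u, w, hli, hΛ⟩ := id h
  have hu : u ∈ Λ := by rw [hΛ]; exact ⟨1, 0, by simp⟩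
  have hw : w ∈ Λ := by rw [hΛ]; exact ⟨0, 1, by simp⟩
  have hfin := fin_ball h (max ‖u‖ ‖w‖)
  set B := {v | v ∈ Λ ∧ ‖v‖ ≤ max ‖u‖ ‖w‖} with hB
  have hT : ({p : E2 × E2 | LinearIndependent ℝ ![p.1, p.2]} ∩ B ×ˢ B).Finite :=
    (hfin.prod hfin).subset Set.inter_subset_right
  obtain ⟨p, hp, hmin⟩ := Set.exists_min_image _ (fun p : E2 × E2 => max ‖p.1‖ ‖p.2‖) hT
    ⟨(u, w), hli, ⟨hu, le_max_left _ _⟩, ⟨hw, le_max_right _ _⟩⟩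
  have key : max ‖p.1‖ ‖p.2‖ ≤ succMin Λ 2 := by
    refine le_csInf ?_ ?_
    · refine ⟨max ‖u‖ ‖w‖, lt_max_of_lt_left (norm_pos_iff.2 (hli.ne_zero 0)), ![u, w], ?_, hli⟩
      intro j; fin_cases j
      · exact ⟨hu, le_max_left _ _⟩
      · exact ⟨hw, le_max_right _ _⟩
    · rintro r ⟨hr, v, hv, hvl⟩
      by_cases hc : max ‖u‖ ‖w‖ ≤ r
      · exact (max_le hp.2.1.2 hp.2.2.2).trans hc
      · push Not at hc
        refine (hmin (v 0, v 1) ⟨?_, ⟨(hv 0).1, (hv 0).2.trans hc.le⟩,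
          ⟨(hv 1).1, (hv 1).2.trans hc.le⟩⟩).trans (max_le (hv 0).2 (hv 1).2)
        have : ![v 0, v 1] = v := by ext j; fin_cases j <;> rfl
        simpa [this] using hvl
  exact ⟨p.1, p.2, hp.2.1.1, hp.2.2.1, hp.1, (le_max_left _ _).trans key,
    (le_max_right _ _).trans key⟩

lemma exists_minPair {Λ : Set E2} (h : IsLattice Λ) (hW : succMin Λ 1 = succMin Λ 2) :
    ∃ p : E2 × E2, IsMinPair Λ p.1 p.2 := by
  obtain ⟨x, y, hx, hy, hli, nx, ny⟩ := attained h
  have hx0 : x ≠ 0 := hli.ne_zero 0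
  have hy0 : y ≠ 0 := hli.ne_zero 1
  have ex := le_antisymm nx (hW ▸ sm1_le hx hx0)
  have ey := le_antisymm ny (hW ▸ sm1_le hy hy0)
  by_cases ha : angle x y ≤ π / 2
  · exact ⟨(x, y), hx, hy, hli, ex.trans hW.symm, ey, ha⟩
  · refine ⟨(x, -y), hx, ?_, ?_, ex.trans hW.symm, by simpa using ey, ?_⟩
    · simpa using lat_sub h hy hy (-1) 0
    · rw [li_iff] at hli ⊢
      intro h'; apply hli; simp at h'; linarith
    · simp only [angle_neg_right]; linarith

lemma gram (x y : E2) : ‖x‖ ^ 2 * ‖y‖ ^ 2 - (inner ℝ x y) ^ 2 = (x 0 * y 1 - x 1 * y 0) ^ 2 := by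
  rw [nsq, nsq, inn]; ring

lemma scalar_ineq {a b l c : ℝ} (hl : 0 < l) (hs' : |a| ≤ 1 / 2) (ht' : |b| ≤ 1 / 2)
    (hg : 0 < l ^ 2 * l ^ 2 - c ^ 2)
    (h4 : l ^ 2 ≤ a ^ 2 * l ^ 2 + b ^ 2 * l ^ 2 + 2 * (a * b * c)) : False := by
  have hc : |c| < l ^ 2 := abs_lt_of_sq_lt_sq (by nlinarith) (by positivity)
  have hab : |a * b * c| ≤ 1 / 4 * |c| := by
    rw [abs_mul, abs_mul]
    have := mul_le_mul hs' ht' (abs_nonneg _) (by norm_num)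
    exact mul_le_mul_of_nonneg_right (by linarith) (abs_nonneg _)
  have ha2 : a ^ 2 ≤ 1 / 4 := by rw [← sq_abs]; nlinarith [abs_nonneg a]
  have hb2 : b ^ 2 ≤ 1 / 4 := by rw [← sq_abs]; nlinarith [abs_nonneg b]
  have h3 := le_abs_self (a * b * c)
  have h5 := mul_le_mul_of_nonneg_right ha2 (sq_nonneg l)
  have h6 := mul_le_mul_of_nonneg_right hb2 (sq_nonneg l)
  linarith

/-- minimal vectors generate a well-rounded lattice -/
lemma minPair_gen {Λ : Set E2} (h : IsLattice Λ) (hW : succMin Λ 1 = succMin Λ 2) {x y : E2}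
    (hp : IsMinPair Λ x y) {v : E2} (hv : v ∈ Λ) : ∃ a b : ℤ, v = a • x + b • y := by
  obtain ⟨hx, hy, hli, nx, ny, -⟩ := hp
  have hd := (li_iff x y).1 hli
  set D := x 0 * y 1 - x 1 * y 0 with hD
  set s := (v 0 * y 1 - v 1 * y 0) / D with hs
  set t := (x 0 * v 1 - x 1 * v 0) / D with ht
  have e0 : v 0 = s * x 0 + t * y 0 := by
    rw [hs, ht]; field_simp; rw [hD]; ring
  have e1 : v 1 = s * x 1 + t * y 1 := by
    rw [hs, ht]; field_simp; rw [hD]; ring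
  refine ⟨round s, round t, ?_⟩
  set w := v - (round s • x + round t • y) with hw
  have hwΛ : w ∈ Λ := by
    have := lat_sub h hv (lat_sub h hx hy (round s) (round t)) 1 (-1)
    simpa [hw, sub_eq_add_neg, add_comm] using this
  by_contra hne
  have hw0 : w ≠ 0 := fun h0 => hne (sub_eq_zero.1 h0)
  have hle := sm1_le hwΛ hw0
  have hs' := abs_sub_round s
  have ht' := abs_sub_round t
  set a := s - round s with ha
  set b := t - round t with hb
  have w0 : w 0 = a * x 0 + b * y 0 := by simp [hw, e0, ha, hb]; ring
  have w1 : w 1 = a * x 1 + b * y 1 := by simp [hw, e1, ha, hb]; ring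
  set l := succMin Λ 1 with hl
  rw [← hW] at ny
  have hlpos : 0 < l := nx ▸ norm_pos_iff.2 (hli.ne_zero 0)
  have hnw : ‖w‖ ^ 2 = a ^ 2 * l ^ 2 + b ^ 2 * l ^ 2 + 2 * (a * b * inner ℝ x y) := by
    rw [nsq, w0, w1]
    conv_rhs => rw [← nx]
    rw [nsq]
    have : x 0 * x 0 + x 1 * x 1 = y 0 * y 0 + y 1 * y 1 := by rw [← nsq, ← nsq, nx, ny]
    rw [inn]; linear_combination (-b ^ 2) * this
  have hg := gram x y
  rw [nx, ny] at hg
  have hpos : 0 < (x 0 * y 1 - x 1 * y 0) ^ 2 := sq_pos_of_ne_zero hd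
  have h4 : l ^ 2 ≤ ‖w‖ ^ 2 := pow_le_pow_left₀ hlpos.le hle 2
  rw [hnw] at h4
  rw [← hg] at hpos
  exact scalar_ineq hlpos hs' ht' hpos h4

lemma inner_nonneg_of {x y : E2} (h : angle x y ≤ π / 2) : 0 ≤ inner ℝ x y := by
  rw [← cos_angle_mul_norm_mul_norm x y]
  have := Real.cos_nonneg_of_neg_pi_div_two_le_of_le (by linarith [angle_nonneg x y, Real.pi_pos]) h
  positivity

lemma minPair_inner_le {Λ : Set E2} (h : IsLattice Λ) (hW : succMin Λ 1 = succMin Λ 2)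
    {x y u v : E2} (hp : IsMinPair Λ x y) (hq : IsMinPair Λ u v) :
    (inner ℝ u v) ≤ (inner ℝ x y : ℝ) := by
  obtain ⟨a, b, hu⟩ := minPair_gen h hW hp hq.1
  obtain ⟨c, d, hv⟩ := minPair_gen h hW hp hq.2.1
  have g1 := gram x y
  have g2 := gram u v
  rw [hp.2.2.2.1, hp.2.2.2.2.1] at g1
  rw [hq.2.2.2.1, hq.2.2.2.2.1] at g2
  have hd : u 0 * v 1 - u 1 * v 0 = ((a * d - b * c : ℤ) : ℝ) * (x 0 * y 1 - x 1 * y 0) := by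
    rw [hu, hv]; simp; ring
  have hne := (li_iff u v).1 hq.2.2.1
  rw [hd] at hne g2
  have hn : a * d - b * c ≠ 0 := by
    intro h0; rw [h0] at hne; simp at hne
  have h1 : (1 : ℝ) ≤ ((a * d - b * c : ℤ) : ℝ) ^ 2 := by
    have : 1 ≤ (a * d - b * c) ^ 2 := by have := sq_pos_of_ne_zero hn; omega
    exact_mod_cast this
  have hi : 0 ≤ (inner ℝ x y : ℝ) := inner_nonneg_of hp.2.2.2.2.2
  refine abs_le_of_sq_le_sq' ?_ hi |>.2
  rw [mul_pow] at g2
  nlinarith [sq_nonneg (x 0 * y 1 - x 1 * y 0)]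

lemma latAngle_eq {Λ : Set E2} (h : IsLattice Λ) (hW : succMin Λ 1 = succMin Λ 2)
    {x y : E2} (hp : IsMinPair Λ x y) : latAngle Λ = angle x y := by
  have hex : ∃ p : E2 × E2, IsMinPair Λ p.1 p.2 := ⟨(x, y), hp⟩
  rw [latAngle, dif_pos hex]
  have hq := hex.choose_spec
  have := le_antisymm (minPair_inner_le h hW hp hq) (minPair_inner_le h hW hq hp)
  rw [angle, angle, this, hp.2.2.2.1, hp.2.2.2.2.1, hq.2.2.2.1, hq.2.2.2.2.1]

lemma succMin_map {Λ : Set E2} (f : E2 →ₗ[ℝ] E2) {k : ℝ} (hk : 0 < k)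
    (hf : ∀ v, ‖f v‖ = k * ‖v‖) (i : ℕ) : succMin (f '' Λ) i = k * succMin Λ i := by
  have hker : LinearMap.ker f = ⊥ := by
    rw [LinearMap.ker_eq_bot']
    intro m hm
    have := hf m
    rw [hm, norm_zero] at this
    have := (mul_eq_zero.1 this.symm).resolve_left hk.ne'
    exact norm_eq_zero.1 this
  rw [succMin, succMin, ← smul_eq_mul, ← Real.sInf_smul_of_nonneg hk.le]
  congr 1
  ext r
  rw [Set.mem_smul_set]
  constructor
  · rintro ⟨hr, v, hv, hl⟩
    choose hv1 hv2 using hv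
    choose w hw hwv using hv1
    refine ⟨r / k, ⟨by positivity, w, fun j => ⟨hw j, ?_⟩, ?_⟩, ?_⟩
    · rw [le_div_iff₀' hk, ← hf, hwv]; exact hv2 j
    · refine LinearIndependent.of_comp f ?_
      have : f ∘ w = v := funext hwv
      rwa [this]
    · simp; field_simp
  · rintro ⟨s, ⟨hs, v, hv, hl⟩, rfl⟩
    refine ⟨by simpa using mul_pos hk hs, f ∘ v, fun j => ⟨⟨v j, (hv j).1, rfl⟩, ?_⟩,
      hl.map' f hker⟩
    simp only [Function.comp, hf, smul_eq_mul]
    exact mul_le_mul_of_nonneg_left (hv j).2 hk.le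

lemma inner_map (f : E2 →ₗ[ℝ] E2) {k : ℝ} (hf : ∀ v, ‖f v‖ = k * ‖v‖) (x y : E2) :
    inner ℝ (f x) (f y) = k ^ 2 * inner ℝ x y := by
  rw [real_inner_eq_norm_add_mul_self_sub_norm_mul_self_sub_norm_mul_self_div_two,
    real_inner_eq_norm_add_mul_self_sub_norm_mul_self_sub_norm_mul_self_div_two, ← map_add,
    hf, hf, hf]; ring

lemma minPair_map {Λ : Set E2} (f : E2 →ₗ[ℝ] E2) {k : ℝ} (hk : 0 < k)
    (hf : ∀ v, ‖f v‖ = k * ‖v‖) {x y : E2} (hp : IsMinPair Λ x y) :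
    IsMinPair (f '' Λ) (f x) (f y) ∧ angle (f x) (f y) = angle x y := by
  have ha : angle (f x) (f y) = angle x y := by
    rw [angle, angle, inner_map f hf, hf, hf]
    congr 1
    rw [show k * ‖x‖ * (k * ‖y‖) = k ^ 2 * (‖x‖ * ‖y‖) by ring, mul_div_mul_left]
    positivity
  obtain ⟨hx, hy, hl, nx, ny, an⟩ := hp
  refine ⟨⟨⟨x, hx, rfl⟩, ⟨y, hy, rfl⟩, ?_, ?_, ?_, ha ▸ an⟩, ha⟩
  · rw [li_iff] at hl ⊢
    intro h0
    have g := gram (f x) (f y)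
    rw [h0, hf, hf, inner_map f hf] at g
    have g' := gram x y
    have : k ^ 4 * (x 0 * y 1 - x 1 * y 0) ^ 2 = 0 := by rw [← g']; linear_combination g
    have h2 : 0 < k ^ 4 * (x 0 * y 1 - x 1 * y 0) ^ 2 := by positivity
    linarith
  · rw [succMin_map f hk hf, hf, nx]
  · rw [succMin_map f hk hf, hf, ny]

lemma toE_apply0 (U : Matrix (Fin 2) (Fin 2) ℝ) (v : E2) (i : Fin 2) :
    (Matrix.toEuclideanLin U v) i = U i 0 * v 0 + U i 1 * v 1 := by
  fin_cases i <;> simp [Matrix.toLpLin_apply]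

lemma orth_norm {U : Matrix (Fin 2) (Fin 2) ℝ} (hU : U.transpose * U = 1) (v : E2) :
    ‖Matrix.toEuclideanLin U v‖ = ‖v‖ := by
  have h : ∀ i j, (U.transpose * U) i j = (1 : Matrix (Fin 2) (Fin 2) ℝ) i j := by simp [hU]
  have h00 := h 0 0
  have h01 := h 0 1
  have h11 := h 1 1
  simp [Matrix.mul_apply, Fin.sum_univ_two] at h00 h01 h11
  rw [← sq_eq_sq₀ (norm_nonneg _) (norm_nonneg _), nsq, nsq, toE_apply0, toE_apply0]
  linear_combination v 0 ^ 2 * h00 + 2 * v 0 * v 1 * h01 + v 1 ^ 2 * h11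

lemma exists_U {x y u v : E2} {k : ℝ} (hk : 0 < k) (hl : LinearIndependent ℝ ![x, y])
    (h1 : ‖u‖ = k * ‖x‖) (h2 : ‖v‖ = k * ‖y‖) (h3 : inner ℝ u v = k ^ 2 * inner ℝ x y) :
    ∃ U : Matrix (Fin 2) (Fin 2) ℝ, U.transpose * U = 1 ∧
      k • Matrix.toEuclideanLin U x = u ∧ k • Matrix.toEuclideanLin U y = v := by
  have hd := (li_iff x y).1 hl
  have h1' : ‖u‖ ^ 2 = k ^ 2 * ‖x‖ ^ 2 := by rw [h1]; ring
  have h2' : ‖v‖ ^ 2 = k ^ 2 * ‖y‖ ^ 2 := by rw [h2]; ring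
  rw [nsq, nsq] at h1' h2'
  rw [inn, inn] at h3
  set D := x 0 * y 1 - x 1 * y 0 with hD
  let U : Matrix (Fin 2) (Fin 2) ℝ := fun i => ![(u i * y 1 - v i * x 1) / (k * D),
    (v i * x 0 - u i * y 0) / (k * D)]
  have hk0 := hk.ne'
  refine ⟨U, ?_, ?_, ?_⟩
  · ext i j
    fin_cases i <;> fin_cases j <;>
      rw [Matrix.mul_apply, Fin.sum_univ_two, Matrix.transpose_apply, Matrix.transpose_apply] <;> simp [U] <;> field_simp
    · linear_combination y 1 ^ 2 * h1' + x 1 ^ 2 * h2' - 2 * x 1 * y 1 * h3 - k ^ 2 * (D + (x 0 * y 1 - x 1 * y 0)) * hD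
    · linear_combination (-y 0 * y 1) * h1' - x 0 * x 1 * h2' + (x 0 * y 1 + x 1 * y 0) * h3
    · linear_combination (-y 0 * y 1) * h1' - x 0 * x 1 * h2' + (x 0 * y 1 + x 1 * y 0) * h3
    · linear_combination y 0 ^ 2 * h1' + x 0 ^ 2 * h2' - 2 * x 0 * y 0 * h3 - k ^ 2 * (D + (x 0 * y 1 - x 1 * y 0)) * hD
  · ext i
    rw [PiLp.smul_apply, toE_apply0]
    simp [U]; field_simp; rw [hD]; ring
  · ext i
    rw [PiLp.smul_apply, toE_apply0]
    simp [U]; field_simp; rw [hD]; ring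

/-- A full-rank lattice `Ω ⊆ ℝ²` is similar to a well-rounded full-rank
lattice `Λ` iff `Ω` is also well-rounded and `θ(Λ) = θ(Ω)`. -/
theorem stmt9 (Λ Ω : Set E2) (hΛ : IsLattice Λ) (hΩ : IsLattice Ω)
    (hWR : succMin Λ 1 = succMin Λ 2) :
    LatSimilar Λ Ω ↔ (succMin Ω 1 = succMin Ω 2 ∧ latAngle Λ = latAngle Ω) := by
  obtain ⟨⟨x, y⟩, hp⟩ := exists_minPair hΛ hWR
  simp only at hp
  constructor
  · rintro ⟨α, U, hα, hU, hΩe⟩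
    let f : E2 →ₗ[ℝ] E2 := α • Matrix.toEuclideanLin U
    have hf : ∀ v, ‖f v‖ = |α| * ‖v‖ := by
      intro v
      simp only [f, LinearMap.smul_apply, norm_smul, orth_norm hU, Real.norm_eq_abs]
    have hk : 0 < |α| := abs_pos.2 hα
    have hΩf : Ω = f '' Λ := hΩe
    have hW' : succMin Ω 1 = succMin Ω 2 := by
      rw [hΩf, succMin_map f hk hf, succMin_map f hk hf, hWR]
    obtain ⟨hm, ha⟩ := minPair_map f hk hf hp
    rw [← hΩf] at hm
    exact ⟨hW', by rw [latAngle_eq hΛ hWR hp, latAngle_eq hΩ hW' hm, ha]⟩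
  · rintro ⟨hW', ha⟩
    obtain ⟨⟨u, v⟩, hq⟩ := exists_minPair hΩ hW'
    simp only at hq
    rw [latAngle_eq hΛ hWR hp, latAngle_eq hΩ hW' hq] at ha
    have hx : 0 < ‖x‖ := norm_pos_iff.2 (hp.2.2.1.ne_zero 0)
    have hu : 0 < ‖u‖ := norm_pos_iff.2 (hq.2.2.1.ne_zero 0)
    have hxy : ‖y‖ = ‖x‖ := by rw [hp.2.2.2.1, hp.2.2.2.2.1, hWR]
    have huv : ‖v‖ = ‖u‖ := by rw [hq.2.2.2.1, hq.2.2.2.2.1, hW']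
    have hk : 0 < ‖u‖ / ‖x‖ := by positivity
    obtain ⟨U, hU, e1, e2⟩ := exists_U (x := x) (y := y) (u := u) (v := v) hk hp.2.2.1
      (by field_simp) (by rw [huv, hxy]; field_simp) (by
        rw [← cos_angle_mul_norm_mul_norm u v, ← cos_angle_mul_norm_mul_norm x y, ha, hxy, huv]
        field_simp)
    refine ⟨‖u‖ / ‖x‖, U, hk.ne', hU, ?_⟩
    ext z
    constructor
    · intro hz
      obtain ⟨a, b, rfl⟩ := minPair_gen hΩ hW' hq hz
      refine ⟨a • x + b • y, lat_sub hΛ hp.1 hp.2.1 a b, ?_⟩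
      simp only [map_add, map_zsmul, smul_add]
      rw [smul_comm _ a, smul_comm _ b, e1, e2]
    · rintro ⟨w, hw, rfl⟩
      obtain ⟨a, b, rfl⟩ := minPair_gen hΛ hWR hp hw
      simp only [map_add, map_zsmul, smul_add]
      rw [smul_comm _ a, smul_comm _ b, e1, e2]
      exact lat_sub hΩ hq.1 hq.2.1 a b
end
end
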